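/- arXiv:1310.0800 — 3 statements merged into one kernel-verified Lean document; each statement's English description precedes it below -/
import Mathlib

section
/- For every fixed real u with 0 < u ≤ 1, the upper-bound expression from the density estimate at the edge satisfies lim_{N→∞} (1/π) · e^{-(√N+u)²} · ((√N+u)^{2N}/N!) · N/((√N+u)²−N) = e^{-2u²} / (2√2 · u · π^{3/2}). -/
open scoped Real Topology

/-!
With `s = √N`, the quotient of `e^{-(s+u)²} (s+u)^{2N}` by its value at `u = 0` is
`exp (2 (s² log (1 + u/s) - u s) - u²)`, whose exponent tends to `-2u²` by the second-order
expansion of the logarithm. By Stirling's formula the value at `u = 0`, which is `e^{-N} N^N`, is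
asymptotic to `N! / √(2πN)`. The factor `1 / √N` lost there is compensated by
`N / ((s+u)² - N) ∼ √N / (2u)`.
-/

open Real Filter Asymptotics

lemma sum_range_add_log_one_sub_isBigO (n : ℕ) :
    (fun x : ℝ ↦ ∑ i ∈ Finset.range n, x ^ (i + 1) / (i + 1) + log (1 - x))
      =O[𝓝 0] fun x ↦ x ^ (n + 1) := by
  refine .of_bound 2 ?_
  filter_upwards [Metric.ball_mem_nhds (0 : ℝ) one_half_pos] with x hx
  replace hx : |x| < 1 / 2 := by simpa using hx
  calc ‖∑ i ∈ Finset.range n, x ^ (i + 1) / (i + 1) + log (1 - x)‖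
      ≤ |x| ^ (n + 1) / (1 - |x|) := abs_log_sub_add_sum_range_le (by linarith) n
    _ ≤ |x| ^ (n + 1) / (1 / 2) := by gcongr; linarith
    _ = 2 * ‖x ^ (n + 1)‖ := by rw [norm_pow, norm_eq_abs]; ring

lemma log_one_add_sub_quadratic_isLittleO :
    (fun x : ℝ ↦ log (1 + x) - (x - x ^ 2 / 2)) =o[𝓝 0] fun x ↦ x ^ 2 := by
  have hneg : Tendsto (fun x : ℝ ↦ -x) (𝓝 0) (𝓝 0) := by
    simpa using (continuous_neg (G := ℝ)).tendsto 0
  have hcubic := (sum_range_add_log_one_sub_isBigO 2).comp_tendsto hneg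
  refine (hcubic.congr (fun x ↦ ?_) (fun x ↦ ?_)).trans_isLittleO
    (isLittleO_pow_pow (by norm_num : 2 < 3)).neg_left
  · simp only [Function.comp_apply, Finset.sum_range_succ, Finset.sum_range_zero, sub_neg_eq_add]
    push_cast
    ring
  · simp only [Function.comp_apply]
    ring

lemma tendsto_sq_mul_log_one_add_div_sub (u : ℝ) :
    Tendsto (fun s : ℝ ↦ s ^ 2 * log (1 + u / s) - u * s) atTop (𝓝 (-(u ^ 2 / 2))) := by
  have hremainder := log_one_add_sub_quadratic_isLittleO.comp_tendsto (tendsto_id.const_div_atTop u)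
  have hscaled : (fun s : ℝ ↦ s ^ 2 * log (1 + u / s) - u * s - -(u ^ 2 / 2))
      =o[atTop] fun _ ↦ u ^ 2 := by
    refine ((isBigO_refl (fun s : ℝ ↦ s ^ 2) atTop).mul_isLittleO hremainder).congr' ?_ ?_
    · filter_upwards [eventually_ne_atTop 0] with s hs
      simp only [Function.comp_apply, id_eq]
      field_simp
      ring
    · filter_upwards [eventually_ne_atTop 0] with s hs
      simp only [Function.comp_apply, id_eq]
      field_simp
  have hzero := (isLittleO_one_iff ℝ).1 (hscaled.trans_isBigO (isBigO_const_const _ one_ne_zero _))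
  exact tendsto_sub_nhds_zero_iff.1 hzero

lemma exp_neg_add_sq_mul_add_pow {s u : ℝ} {n : ℕ} (hs : 0 < s) (hsu : 0 < s + u)
    (hn : s ^ 2 = n) :
    exp (-(s + u) ^ 2) * (s + u) ^ (2 * n) =
      exp (2 * (s ^ 2 * log (1 + u / s) - u * s) - u ^ 2) * (exp (-n) * (n : ℝ) ^ n) := by
  have hfactor : s + u = s * (1 + u / s) := by field_simp
  have hpos : 0 < 1 + u / s := pos_of_mul_pos_right (hfactor ▸ hsu) hs.le
  have hpow : (1 + u / s) ^ (2 * n) = exp (2 * s ^ 2 * log (1 + u / s)) := by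
    rw [hn, ← exp_log (pow_pos hpos _), log_pow, Nat.cast_mul, Nat.cast_ofNat]
  calc exp (-(s + u) ^ 2) * (s + u) ^ (2 * n)
      = exp (-(s + u) ^ 2) * (exp (2 * s ^ 2 * log (1 + u / s)) * (n : ℝ) ^ n) := by
        rw [← hpow, ← hn, ← pow_mul, mul_comm (_ ^ _) (s ^ _), ← mul_pow, ← hfactor]
    _ = exp (-(s + u) ^ 2 + 2 * s ^ 2 * log (1 + u / s)) * (n : ℝ) ^ n := by
        rw [exp_add]
        ring
    _ = exp (2 * (s ^ 2 * log (1 + u / s) - u * s) - u ^ 2 + -n) * (n : ℝ) ^ n := by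
        congr 2
        rw [← hn]
        ring
    _ = exp (2 * (s ^ 2 * log (1 + u / s) - u * s) - u ^ 2) * (exp (-n) * (n : ℝ) ^ n) := by
        rw [exp_add, mul_assoc]

lemma tendsto_sqrt_mul_exp_neg_mul_pow_div_factorial :
    Tendsto (fun n : ℕ ↦ √n * (exp (-n) * (n : ℝ) ^ n / n.factorial)) atTop (𝓝 (√(2 * π))⁻¹) := by
  have hlim := (Stirling.tendsto_stirlingSeq_sqrt_pi.const_mul √2).inv₀ (by positivity)
  rw [← sqrt_mul zero_le_two] at hlim
  refine hlim.congr fun n ↦ ?_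
  rw [Stirling.stirlingSeq, sqrt_mul zero_le_two, div_pow, ← exp_nat_mul, mul_one, exp_neg]
  field_simp

lemma tendsto_sqrt_natCast_atTop : Tendsto (fun n : ℕ ↦ √(n : ℝ)) atTop atTop :=
  tendsto_sqrt_atTop.comp tendsto_natCast_atTop_atTop

/-- The bracket is the mass at `n` of the Poisson distribution with mean `(√n+u)²`, whose standard
deviation is `∼ √n`. Its mean is thus about `2u` standard deviations from `n`, which is why the
Gaussian factor `exp (-(2u)² / 2)` appears. -/
lemma tendsto_sqrt_mul_exp_neg_add_sq_mul_add_pow_div_factorial (u : ℝ) :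
    Tendsto (fun n : ℕ ↦ √n * (exp (-(√n + u) ^ 2) * (√n + u) ^ (2 * n) / n.factorial))
      atTop (𝓝 (exp (-2 * u ^ 2) * (√(2 * π))⁻¹)) := by
  have hexponent : Tendsto (fun n : ℕ ↦ 2 * (√n ^ 2 * log (1 + u / √n) - u * √n) - u ^ 2)
      atTop (𝓝 (-2 * u ^ 2)) := by
    rw [show -2 * u ^ 2 = 2 * -(u ^ 2 / 2) - u ^ 2 by ring]
    exact (((tendsto_sq_mul_log_one_add_div_sub u).comp
      tendsto_sqrt_natCast_atTop).const_mul 2).sub_const (u ^ 2)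
  refine (hexponent.rexp.mul tendsto_sqrt_mul_exp_neg_mul_pow_div_factorial).congr' ?_
  filter_upwards [tendsto_sqrt_natCast_atTop.eventually_gt_atTop 0,
    tendsto_sqrt_natCast_atTop.eventually_gt_atTop (-u)] with n hn hnu
  rw [exp_neg_add_sq_mul_add_pow hn (neg_lt_iff_pos_add.1 hnu) (sq_sqrt n.cast_nonneg)]
  ring

lemma tendsto_div_add_sq_sub_sq {u : ℝ} (hu : u ≠ 0) :
    Tendsto (fun s : ℝ ↦ s / ((s + u) ^ 2 - s ^ 2)) atTop (𝓝 (2 * u)⁻¹) := by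
  have hlim : Tendsto (fun s : ℝ ↦ 2 * u + u ^ 2 / s) atTop (𝓝 (2 * u)) := by
    simpa using (tendsto_id.const_div_atTop (u ^ 2)).const_add (2 * u)
  refine (hlim.inv₀ (by simpa using hu)).congr' ?_
  filter_upwards [eventually_ne_atTop 0] with s hs
  have hfactor : (s + u) ^ 2 - s ^ 2 = s * (2 * u + u ^ 2 / s) := by
    field_simp
    ring
  rw [hfactor, div_mul_cancel_left₀ hs]

lemma rpow_three_halves {x : ℝ} (hx : 0 ≤ x) : x ^ ((3 : ℝ) / 2) = x * √x := by
  rw [rpow_div_two_eq_sqrt _ hx, rpow_ofNat, pow_succ, sq_sqrt hx]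

theorem edge_upper_bound_limit_general {u : ℝ} (hu : u ≠ 0) :
    Tendsto
      (fun N : ℕ ↦
        (1 / π) * exp (-(√N + u) ^ 2) * ((√N + u) ^ (2 * N) / N.factorial) *
          (N / ((√N + u) ^ 2 - N)))
      atTop (𝓝 (exp (-2 * u ^ 2) / (2 * √2 * u * π ^ ((3 : ℝ) / 2)))) := by
  have hpoisson := tendsto_sqrt_mul_exp_neg_add_sq_mul_add_pow_div_factorial u
  have hquotient := (tendsto_div_add_sq_sub_sq hu).comp tendsto_sqrt_natCast_atTop
  have hvalue : exp (-2 * u ^ 2) / (2 * √2 * u * π ^ ((3 : ℝ) / 2)) =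
      1 / π * (exp (-2 * u ^ 2) * (√(2 * π))⁻¹) * (2 * u)⁻¹ := by
    rw [rpow_three_halves pi_nonneg, sqrt_mul zero_le_two]
    field_simp
  rw [hvalue]
  refine ((hpoisson.const_mul (1 / π)).mul hquotient).congr fun N ↦ ?_
  have hN : √(N : ℝ) ^ 2 = N := sq_sqrt N.cast_nonneg
  have hsplit : (N : ℝ) / ((√N + u) ^ 2 - N) = √N * (√N / ((√N + u) ^ 2 - N)) := by
    rw [← mul_div_assoc, ← sq, hN]
  rw [Function.comp_apply, hN, hsplit]
  ring

/-- Limit of the upper edge bound `(1/π) e^{-(√N+u)²} ((√N+u)^{2N}/N!) · N/((√N+u)²−N)`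
as `N → ∞`. -/
theorem edge_upper_bound_limit (u : ℝ) (hu0 : 0 < u) (hu1 : u ≤ 1) :
    Filter.Tendsto
      (fun N : ℕ =>
        (1 / Real.pi) * Real.exp (-(Real.sqrt N + u) ^ 2) *
          ((Real.sqrt N + u) ^ (2 * N) / N.factorial) *
          (N / ((Real.sqrt N + u) ^ 2 - N)))
      Filter.atTop
      (𝓝 (Real.exp (-2 * u ^ 2) / (2 * Real.sqrt 2 * u * Real.pi ^ ((3 : ℝ) / 2)))) :=
  edge_upper_bound_limit_general hu0.ne'
end

section
/- The central value of the lower incomplete gamma function satisfies lim_{n→∞} γ(n+1, n+1)/n! = 1/2. -/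
open scoped Real Topology

/-- The lower incomplete gamma function `γ(n+1, a) = ∫_0^a t^n e^{-t} dt`. -/
noncomputable def lowerIncGamma (n : ℕ) (a : ℝ) : ℝ :=
  ∫ t in (0:ℝ)..a, t ^ n * Real.exp (-t)

/-!
Repeated integration by parts gives `γ(n+1, r) / n! = P(N > n)` for a Poisson variable `N` of
rate `r`. At `r = n + 1` this is the probability that `N` is at least its mean. As `r → ∞` the
characteristic function `exp (r (e^{iu} - 1 - iu))`, `u = t / √r`, of `(N - r) / √r` tends to
`exp (-t² / 2)`, so by Lévy's theorem that probability tends to the mass which the standard Gaussian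
gives to the half-line `[0, ∞)`; by symmetry this is `1/2`.
-/

open Filter MeasureTheory ProbabilityTheory Set
open scoped NNReal Nat

lemma tendsto_mul_exp_sub_one_sub_id {α : Type*} {l : Filter α} {a z : α → ℂ} {c : ℂ}
    (hz : Tendsto z l (𝓝 0)) (haz : Tendsto (fun x ↦ a x * z x ^ 2) l (𝓝 c)) :
    Tendsto (fun x ↦ a x * (Complex.exp (z x) - 1 - z x)) l (𝓝 (c / 2)) := by
  have hTaylor := (Complex.exp_sub_sum_range_succ_isLittleO_pow 2).tendsto_div_nhds_zero.comp hz
  have hlim := (haz.mul hTaylor).add (haz.div_const 2)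
  rw [mul_zero, zero_add] at hlim
  refine hlim.congr fun x ↦ ?_
  obtain h0 | h0 := eq_or_ne (z x) 0
  · simp [h0]
  · simp only [Function.comp_apply, Finset.sum_range_succ, Finset.range_zero, Finset.sum_empty,
      Nat.factorial]
    field_simp
    push_cast
    ring

lemma tendsto_measureReal_preimage_of_tendstoInDistribution {ι Ω' S : Type*} {Ω : ι → Type*}
    {_ : ∀ i, MeasurableSpace (Ω i)} {_ : MeasurableSpace Ω'} {_ : MeasurableSpace S}
    [TopologicalSpace S] [OpensMeasurableSpace S] [HasOuterApproxClosed S]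
    {μ : ∀ i, Measure (Ω i)} [∀ i, IsProbabilityMeasure (μ i)]
    {ν : Measure Ω'} [IsProbabilityMeasure ν] {X : ∀ i, Ω i → S} {Z : Ω' → S} {l : Filter ι}
    (h : TendstoInDistribution X l Z μ ν) {s : Set S} (hs : MeasurableSet s)
    (hfrontier : ν (Z ⁻¹' frontier s) = 0) :
    Tendsto (fun i ↦ (μ i).real (X i ⁻¹' s)) l (𝓝 (ν.real (Z ⁻¹' s))) := by
  have hZ := h.aemeasurable_limit
  have hmap := ProbabilityMeasure.tendsto_measure_of_null_frontier_of_tendsto' h.tendsto (E := s)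
    (by simpa [Measure.map_apply_of_aemeasurable hZ isClosed_frontier.measurableSet])
  simp only [ProbabilityMeasure.coe_mk, Measure.map_apply_of_aemeasurable hZ hs,
    Measure.map_apply_of_aemeasurable (h.forall_aemeasurable _) hs] at hmap
  exact (ENNReal.tendsto_toReal (measure_ne_top ν _)).comp hmap

lemma measureReal_Ici_zero_of_isNegInvariant {G : Type*} [AddCommGroup G] [LinearOrder G]
    [IsOrderedAddMonoid G] [TopologicalSpace G] [OrderClosedTopology G] [MeasurableSpace G]
    [OpensMeasurableSpace G] [MeasurableNeg G] (μ : Measure G) [IsProbabilityMeasure μ]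
    [μ.IsNegInvariant] (h0 : μ {0} = 0) : μ.real (Ici 0) = 1 / 2 := by
  have hIic : μ.real (Iic 0) = μ.real (Ici 0) := by
    simpa [measureReal_def] using congrArg ENNReal.toReal (Measure.measure_neg μ (Ici (0 : G)))
  have hsum : μ.real (Iic 0) + μ.real (Ioi 0) = 1 := by
    rw [← compl_Iic]
    exact probReal_add_probReal_compl measurableSet_Iic
  rw [hIic, measureReal_congr (Ioi_ae_eq_Ici' h0)] at hsum
  linarith

instance isNegInvariant_gaussianReal_zero (v : ℝ≥0) : (gaussianReal 0 v).IsNegInvariant where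
  neg_eq_self := gaussianReal_map_neg.trans (by rw [neg_zero])

/-- The standardization `(k - r) / √r` of a value `k` of a Poisson variable of rate `r`, whose mean
and variance are both `r`. At `r = 0` it is constantly `0`. -/
noncomputable def poissonStandardize (r : ℝ≥0) (k : ℕ) : ℝ :=
  (k - r) / √r

lemma charFun_map_poissonStandardize (r : ℝ≥0) (t : ℝ) :
    charFun ((poissonMeasure r).map (poissonStandardize r)) t =
      Complex.exp (r * (Complex.exp ((t / √r : ℝ) * Complex.I) - 1 -
        (t / √r : ℝ) * Complex.I)) := by
  have haffine : poissonStandardize r =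
      (· + -√(r : ℝ)) ∘ ((√(r : ℝ))⁻¹ * ·) ∘ (Nat.cast : ℕ → ℝ) := by
    ext k
    simp only [poissonStandardize, sub_div, Real.div_sqrt, Function.comp_apply]
    ring
  have hsqrt : (r : ℂ) * (t / √r : ℝ) = √(r : ℝ) * t := by
    norm_cast
    rw [mul_div_left_comm, Real.div_sqrt, mul_comm]
  rw [haffine, ← Measure.map_map (by fun_prop) .of_discrete,
    ← Measure.map_map (by fun_prop) .of_discrete, charFun_map_add_const, charFun_map_mul,
    charFun_map_cast_poissonMeasure, ← Complex.exp_add, inv_mul_eq_div, mul_sub (r : ℂ) _ (_ * _),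
    ← mul_assoc (r : ℂ), hsqrt, RCLike.inner_apply, conj_trivial]
  congr 1
  push_cast
  ring

lemma tendsto_charFun_map_poissonStandardize (t : ℝ) :
    Tendsto (fun r : ℝ≥0 ↦ charFun ((poissonMeasure r).map (poissonStandardize r)) t) atTop
      (𝓝 (charFun (gaussianReal 0 1) t)) := by
  have hz : Tendsto (fun r : ℝ≥0 ↦ ((t / √r : ℝ) * Complex.I : ℂ)) atTop (𝓝 0) := by
    have hreal : Tendsto (fun r : ℝ≥0 ↦ t / √(r : ℝ)) atTop (𝓝 0) :=
      (Real.tendsto_sqrt_atTop.comp (NNReal.tendsto_coe_atTop.2 tendsto_id)).const_div_atTop t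
    simpa using hreal.ofReal.mul_const Complex.I
  have hrz : Tendsto (fun r : ℝ≥0 ↦ (r : ℂ) * ((t / √r : ℝ) * Complex.I) ^ 2) atTop
      (𝓝 (-(t : ℂ) ^ 2)) := by
    refine tendsto_const_nhds.congr' ?_
    filter_upwards [eventually_gt_atTop 0] with r hr
    have hsq : (r : ℝ) * (t / √r) ^ 2 = t ^ 2 := by
      rw [div_pow, Real.sq_sqrt r.coe_nonneg]
      field_simp
    rw [mul_pow, Complex.I_sq, mul_neg_one, mul_neg]
    exact_mod_cast congrArg (-·) hsq.symm
  simpa [charFun_map_poissonStandardize, charFun_gaussianReal, neg_div] using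
    (tendsto_mul_exp_sub_one_sub_id hz hrz).cexp

theorem tendstoInDistribution_poissonStandardize :
    TendstoInDistribution poissonStandardize atTop id poissonMeasure (gaussianReal 0 1) where
  forall_aemeasurable _ := .of_discrete
  tendsto := by
    refine tendsto_of_seq_tendsto fun r hr ↦ ?_
    refine ProbabilityMeasure.tendsto_of_tendsto_charFun fun t ↦ ?_
    simp only [ProbabilityMeasure.coe_mk, Measure.map_id]
    exact (tendsto_charFun_map_poissonStandardize t).comp hr

lemma tendsto_poissonMeasure_real_rate_le :
    Tendsto (fun r : ℝ≥0 ↦ (poissonMeasure r).real {k | (r : ℝ) ≤ k}) atTop (𝓝 (1 / 2)) := by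
  have := nullSingletonClass_gaussianReal (μ := 0) one_ne_zero
  have hlim := tendsto_measureReal_preimage_of_tendstoInDistribution
    tendstoInDistribution_poissonStandardize (measurableSet_Ici (a := 0)) (by simp)
  rw [preimage_id, measureReal_Ici_zero_of_isNegInvariant _ (measure_singleton 0)] at hlim
  refine hlim.congr' ?_
  filter_upwards [eventually_gt_atTop 0] with r hr
  congr 1 with k
  have hsqrt : 0 < √(r : ℝ) := by positivity
  simp [poissonStandardize, le_div_iff₀ hsqrt]

lemma lowerIncGamma_zero (a : ℝ) : lowerIncGamma 0 a = 1 - Real.exp (-a) := by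
  simp [lowerIncGamma]

lemma lowerIncGamma_succ (n : ℕ) (a : ℝ) :
    lowerIncGamma (n + 1) a = (n + 1) * lowerIncGamma n a - a ^ (n + 1) * Real.exp (-a) := by
  have hpow (t : ℝ) : HasDerivAt (fun t : ℝ ↦ t ^ (n + 1)) ((n + 1) * t ^ n) t := by
    simpa using hasDerivAt_pow (n + 1) t
  have hexp (t : ℝ) : HasDerivAt (fun t : ℝ ↦ -Real.exp (-t)) (Real.exp (-t)) t := by
    simpa using (hasDerivAt_neg t).exp.fun_neg
  have hparts := intervalIntegral.integral_mul_deriv_eq_deriv_mul (a := 0) (b := a)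
    (fun t _ ↦ hpow t) (fun t _ ↦ hexp t)
    (Continuous.intervalIntegrable (by fun_prop) _ _)
    (Continuous.intervalIntegrable (by fun_prop) _ _)
  simp only [mul_neg, mul_assoc, intervalIntegral.integral_neg,
    intervalIntegral.integral_const_mul] at hparts
  simp only [lowerIncGamma, hparts, zero_pow n.succ_ne_zero, zero_mul]
  ring

lemma poissonMeasure_real_Ioi_eq_lowerIncGamma (r : ℝ≥0) (n : ℕ) :
    (poissonMeasure r).real (Ioi n) = lowerIncGamma n r / n ! := by
  induction n with
  | zero =>
    have hcompl : Ioi 0 = ({0} : Set ℕ)ᶜ := by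
      ext k
      simp [Nat.pos_iff_ne_zero]
    rw [hcompl, probReal_compl_eq_one_sub (measurableSet_singleton 0),
      poissonMeasure_real_singleton, lowerIncGamma_zero]
    simp
  | succ n ih =>
    have hdiff : Ioi (n + 1) = Ioi n \ {n + 1} := by
      ext k
      simp only [mem_Ioi, Set.mem_sdiff, mem_singleton_iff]
      lia
    rw [hdiff, measureReal_sdiff (by simp) (measurableSet_singleton _), ih,
      poissonMeasure_real_singleton, lowerIncGamma_succ, Nat.factorial_succ]
    push_cast
    field_simp

/-- `γ(n+1, n+1)/n! → 1/2` as `n → ∞`. -/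
theorem lowerIncGamma_central_limit :
    Filter.Tendsto (fun n : ℕ => lowerIncGamma n (n + 1) / n.factorial)
      Filter.atTop (𝓝 (1 / 2)) := by
  have hrate : Tendsto (fun n : ℕ ↦ ((n + 1 : ℕ) : ℝ≥0)) atTop atTop :=
    tendsto_natCast_atTop_atTop.comp (tendsto_add_atTop_nat 1)
  refine (tendsto_poissonMeasure_real_rate_le.comp hrate).congr fun n ↦ ?_
  have htail : {k : ℕ | (((n + 1 : ℕ) : ℝ≥0) : ℝ) ≤ k} = Ioi n := by
    ext k
    simp only [NNReal.coe_natCast, Nat.cast_le, mem_ofPred_eq, mem_Ioi, Nat.add_one_le_iff]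
  rw [Function.comp_apply, htail, poissonMeasure_real_Ioi_eq_lowerIncGamma, NNReal.coe_natCast,
    Nat.cast_add_one]
end

section
/- For every real r ≥ 0, the series Σ_{n=0}^∞ r^n / γ(n+1, n+1) converges (is summable). -/
open scoped Real

/-!
For fixed `b > 0`, bounding `e^{-t} ≥ e^{-b}` on `[0, b]` gives
`γ(n+1, b) ≥ e^{-b} b^{n+1} / (n+1)`. If `a n → ∞`, then `γ(n+1, a n) ≥ γ(n+1, b)` for large `n`,
so the power series with coefficients `1 / γ(n+1, a n)` has radius of convergence at least `b`.
As `b` is arbitrary, this radius is infinite.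
-/

open Filter

theorem intervalIntegrable_pow_mul_exp_neg (n : ℕ) (a b : ℝ) :
    IntervalIntegrable (fun t : ℝ => t ^ n * Real.exp (-t)) MeasureTheory.volume a b :=
  Continuous.intervalIntegrable (by fun_prop) a b

theorem monotoneOn_lowerIncGamma (n : ℕ) : MonotoneOn (lowerIncGamma n) (Set.Ici 0) := by
  intro b hb a _ hba
  refine intervalIntegral.integral_mono_interval le_rfl hb hba ?_
    (intervalIntegrable_pow_mul_exp_neg n 0 a)
  filter_upwards [MeasureTheory.ae_restrict_mem measurableSet_Ioc] with t ht
  exact mul_nonneg (pow_nonneg ht.1.le n) (Real.exp_pos _).le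

theorem pow_div_mul_exp_neg_le_lowerIncGamma (n : ℕ) {a : ℝ} (ha : 0 ≤ a) :
    a ^ (n + 1) / (n + 1) * Real.exp (-a) ≤ lowerIncGamma n a := by
  calc a ^ (n + 1) / (n + 1) * Real.exp (-a)
      = ∫ t in (0:ℝ)..a, t ^ n * Real.exp (-a) := by simp
    _ ≤ lowerIncGamma n a := by
      refine intervalIntegral.integral_mono_on ha (Continuous.intervalIntegrable (by fun_prop) 0 a)
        (intervalIntegrable_pow_mul_exp_neg n 0 a) fun t ht => ?_
      have ht₀ : 0 ≤ t := ht.1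
      have hta : t ≤ a := ht.2
      gcongr

theorem lowerIncGamma_nonneg (n : ℕ) {a : ℝ} (ha : 0 ≤ a) : 0 ≤ lowerIncGamma n a :=
  le_trans (by positivity) (pow_div_mul_exp_neg_le_lowerIncGamma n ha)

theorem inv_lowerIncGamma_le (n : ℕ) {a b : ℝ} (hb : 0 < b) (hba : b ≤ a) :
    (lowerIncGamma n a)⁻¹ ≤ Real.exp b / b * ((n + 1) / b ^ n) := by
  calc (lowerIncGamma n a)⁻¹
      ≤ (b ^ (n + 1) / (n + 1) * Real.exp (-b))⁻¹ :=
        inv_anti₀ (by positivity) <| (pow_div_mul_exp_neg_le_lowerIncGamma n hb.le).trans <|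
          monotoneOn_lowerIncGamma n hb.le (hb.le.trans hba) hba
    _ = Real.exp b / b * ((n + 1) / b ^ n) := by
      rw [Real.exp_neg, pow_succ]
      field_simp

theorem summable_pow_div_lowerIncGamma_general {A : Type*} [NormedRing A] [NormedAlgebra ℝ A]
    [CompleteSpace A] {a : ℕ → ℝ} (ha : Tendsto a atTop atTop) (x : A) :
    Summable fun n : ℕ => (lowerIncGamma n (a n))⁻¹ • x ^ n := by
  set b : ℝ := ‖x‖ + 1
  have hb : 0 < b := by positivity
  have hq : ‖‖x‖ / b‖ < 1 := by
    rw [Real.norm_of_nonneg (by positivity), div_lt_one hb]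
    exact lt_add_one ‖x‖
  have hgeom : Summable fun n : ℕ => ((n : ℝ) + 1) * (‖x‖ / b) ^ n := by
    simpa using summable_choose_mul_geometric_of_norm_lt_one 1 hq
  refine .of_norm_bounded_eventually_nat (hgeom.mul_left (Real.exp b / b)) ?_
  filter_upwards [ha.eventually_ge_atTop b, eventually_gt_atTop 0] with n hba hn
  calc ‖(lowerIncGamma n (a n))⁻¹ • x ^ n‖
      = (lowerIncGamma n (a n))⁻¹ * ‖x ^ n‖ := by
        rw [norm_smul, Real.norm_of_nonneg
          (inv_nonneg.mpr (lowerIncGamma_nonneg n (hb.le.trans hba)))]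
    _ ≤ Real.exp b / b * ((n + 1) / b ^ n) * ‖x‖ ^ n := by
        gcongr
        · exact inv_lowerIncGamma_le n hb hba
        · exact norm_pow_le' x hn
    _ = Real.exp b / b * ((n + 1) * (‖x‖ / b) ^ n) := by
        rw [div_pow]
        ring

/-- For every `r ≥ 0`, the series `Σ_n r^n / γ(n+1, n+1)` is summable. -/
theorem summable_pow_div_lowerIncGamma (r : ℝ) (hr : 0 ≤ r) :
    Summable (fun n : ℕ => r ^ n / lowerIncGamma n (n + 1)) := by
  simpa only [smul_eq_mul, inv_mul_eq_div] using summable_pow_div_lowerIncGamma_general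
    (tendsto_atTop_add_const_right atTop 1 tendsto_natCast_atTop_atTop) r
end
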